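/- arXiv:1511.07156 — 2 statements merged into one kernel-verified Lean document; each statement's English description precedes it below -/
import Mathlib

section
/- Let 0<q<1, let 0<a<b, and let α,β ≥ 0 satisfy αa = βb. Then for all real numbers x > x₁ > 0 one has exp[αa(x−x₁)(ψ_q(ax₁)−ψ_q(bx₁))] ≤ (Γ_q(bx₁))^β/(Γ_q(ax₁))^α · (Γ_q(ax))^α/(Γ_q(bx))^β ≤ 1. -/
/-- The q-gamma function for `0 < q < 1`:
`Γ_q(x) = (1-q)^{1-x} ∏_{j=0}^∞ (1-q^{j+1})/(1-q^{j+x})`. -/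
noncomputable def qGamma (q x : ℝ) : ℝ :=
  (1 - q) ^ (1 - x) * ∏' j : ℕ, (1 - q ^ (j + 1)) / (1 - q ^ ((j : ℝ) + x))

/-- The q-digamma function for `0 < q < 1`:
`ψ_q(x) = -ln(1-q) + ln q * ∑_{k=1}^∞ q^{kx}/(1-q^k)`. -/
noncomputable def qDigamma (q x : ℝ) : ℝ :=
  -Real.log (1 - q) + Real.log q * ∑' k : ℕ, q ^ (((k : ℝ) + 1) * x) / (1 - q ^ (k + 1))

/-!
Expanding the logarithms in the product for `Γ_q` and exchanging the two summations gives
`log Γ_q(x) = (1 - x) log (1 - q) + ∑ q^{kx} / (k (1 - q^k)) + const`, and termwise differentiation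
then yields `(log Γ_q)' = ψ_q` and `ψ_q'(x) = (log q)² ∑ k q^{kx} / (1 - q^k)`.

Since `α a = β b`, the function `L(x) = α log Γ_q(ax) - β log Γ_q(bx)` has derivative
`α a (ψ_q(ax) - ψ_q(bx)) ≤ 0`, so `L` is antitone; this is the upper bound. The lower bound is the
tangent line inequality for `L` at `x₁`, because `L` is convex: `L'' ≥ 0` says that `x ψ_q'(x)` is
antitone. For the latter, let `t ≤ s`: the sequence `t q^{kt} - s q^{ks}` changes sign at most once,
from negative to positive, and has nonnegative sum, so the sum stays nonnegative after weighting
with the increasing positive sequence `k / (1 - q^k)`.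
-/

lemma tsum_mul_nonneg_of_single_crossing {w f : ℕ → ℝ} (hw : Monotone w) (hw₀ : 0 ≤ w 0)
    (hcross : ∀ ⦃i j⦄, i ≤ j → 0 ≤ f i → 0 ≤ f j) (hf : Summable f)
    (hwf : Summable fun k ↦ w k * f k) (hsum : 0 ≤ ∑' k, f k) :
    0 ≤ ∑' k, w k * f k := by
  classical
  have hex : ∃ k, 0 ≤ f k := by
    by_contra! hneg
    have : ∑' k, f k < ∑' _ : ℕ, (0 : ℝ) :=
      hf.tsum_lt_tsum (fun k ↦ (hneg k).le) (hneg 0) summable_zero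
    exact absurd hsum (by simpa using this)
  obtain ⟨N, hN, hlt⟩ : ∃ N, 0 ≤ f N ∧ ∀ k < N, f k ≤ 0 :=
    ⟨Nat.find hex, Nat.find_spec hex, fun k hk ↦ (not_le.1 (Nat.find_min hex hk)).le⟩
  calc 0 ≤ w N * ∑' k, f k := mul_nonneg (hw₀.trans (hw N.zero_le)) hsum
    _ = ∑' k, w N * f k := tsum_mul_left.symm
    _ ≤ ∑' k, w k * f k := (hf.mul_left _).tsum_le_tsum (fun k ↦ ?_) hwf
  rcases lt_or_ge k N with hk | hk
  · exact mul_le_mul_of_nonpos_right (hw hk.le) (hlt k hk)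
  · exact mul_le_mul_of_nonneg_right (hw hk) (hcross hk hN)

section Rpow

variable {q : ℝ}

lemma rpow_succ_mul_eq_pow (hq : 0 ≤ q) (x : ℝ) (k : ℕ) :
    q ^ (((k : ℝ) + 1) * x) = (q ^ x) ^ (k + 1) := by
  rw [mul_comm, ← Real.rpow_mul_natCast hq, Nat.cast_succ]

lemma one_sub_pow_succ_pos (hq₀ : 0 ≤ q) (hq₁ : q < 1) (k : ℕ) : 0 < 1 - q ^ (k + 1) :=
  sub_pos.2 (pow_lt_one₀ hq₀ hq₁ k.succ_ne_zero)

lemma one_sub_rpow_pos (hq₀ : 0 ≤ q) (hq₁ : q < 1) {x : ℝ} (hx : 0 < x) : 0 < 1 - q ^ x :=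
  sub_pos.2 (Real.rpow_lt_one hq₀ hq₁ hx)

lemma rpow_sub_one_div_neg (hq₀ : 0 < q) (hq₁ : q < 1) {x : ℝ} (hx : x ≠ 0) :
    (q ^ x - 1) / x < 0 := by
  rcases hx.lt_or_gt with hneg | hpos
  · exact div_neg_of_pos_of_neg
      (sub_pos.2 (Real.one_lt_rpow_of_pos_of_lt_one_of_neg hq₀ hq₁ hneg)) hneg
  · exact div_neg_of_neg_of_pos (sub_neg.2 (Real.rpow_lt_one hq₀.le hq₁ hpos)) hpos

-- `x / (1 - q ^ x)` is the negated inverse of the slope of the convex function `q ^ ·` from `0`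
-- to `x`.
lemma div_one_sub_rpow_le_div_one_sub_rpow (hq₀ : 0 < q) (hq₁ : q < 1) {x y : ℝ} (hx : x ≠ 0)
    (hy : y ≠ 0) (hxy : x ≤ y) : x / (1 - q ^ x) ≤ y / (1 - q ^ y) := by
  have hslope : (q ^ x - 1) / x ≤ (q ^ y - 1) / y := by
    simpa using (convexOn_rpow_left hq₀).secant_mono (Set.mem_univ 0) (Set.mem_univ x)
      (Set.mem_univ y) hx hy hxy
  have hinv := (inv_le_inv_of_neg (rpow_sub_one_div_neg hq₀ hq₁ hy)
    (rpow_sub_one_div_neg hq₀ hq₁ hx)).2 hslope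
  rw [inv_div, inv_div] at hinv
  rw [← neg_sub (q ^ x), ← neg_sub (q ^ y), div_neg, div_neg]
  exact neg_le_neg hinv

lemma monotone_succ_div_one_sub_pow_succ (hq₀ : 0 < q) (hq₁ : q < 1) :
    Monotone fun k : ℕ ↦ ((k : ℝ) + 1) / (1 - q ^ (k + 1)) := by
  intro j k hjk
  simp only [← Nat.cast_succ, ← Real.rpow_natCast]
  exact div_one_sub_rpow_le_div_one_sub_rpow hq₀ hq₁ (by positivity) (by positivity) (by gcongr)

lemma hasSum_rpow_succ_mul (hq₀ : 0 ≤ q) (hq₁ : q < 1) {x : ℝ} (hx : 0 < x) :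
    HasSum (fun k : ℕ ↦ q ^ (((k : ℝ) + 1) * x)) (q ^ x / (1 - q ^ x)) := by
  simp only [rpow_succ_mul_eq_pow hq₀, pow_succ', div_eq_mul_inv]
  exact (hasSum_geometric_of_lt_one (Real.rpow_nonneg hq₀ x)
    (Real.rpow_lt_one hq₀ hq₁ hx)).mul_left _

lemma mul_rpow_div_one_sub_rpow_le (hq₀ : 0 < q) (hq₁ : q < 1) {t s : ℝ} (ht : 0 < t)
    (hts : t ≤ s) : s * (q ^ s / (1 - q ^ s)) ≤ t * (q ^ t / (1 - q ^ t)) := by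
  have hreflect : ∀ x, 0 < x → x * (q ^ x / (1 - q ^ x)) = -x / (1 - q ^ (-x)) := by
    intro x hx
    have h₁ := (one_sub_rpow_pos hq₀.le hq₁ hx).ne'
    have h₂ : q ^ x - 1 ≠ 0 := by rwa [← neg_sub, neg_ne_zero]
    have h₃ := (Real.rpow_pos_of_pos hq₀ x).ne'
    rw [Real.rpow_neg hq₀.le]
    field_simp
    ring
  have hs := ht.trans_le hts
  rw [hreflect s hs, hreflect t ht]
  exact div_one_sub_rpow_le_div_one_sub_rpow hq₀ hq₁ (neg_ne_zero.2 hs.ne')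
    (neg_ne_zero.2 ht.ne') (neg_le_neg hts)

lemma mul_rpow_succ_mul_single_crossing (hq₀ : 0 < q) (hq₁ : q < 1) {t s : ℝ} (ht : 0 ≤ t)
    (hts : t ≤ s) ⦃i j : ℕ⦄ (hij : i ≤ j)
    (hi : 0 ≤ t * q ^ (((i : ℝ) + 1) * t) - s * q ^ (((i : ℝ) + 1) * s)) :
    0 ≤ t * q ^ (((j : ℝ) + 1) * t) - s * q ^ (((j : ℝ) + 1) * s) := by
  obtain ⟨d, rfl⟩ := Nat.exists_eq_add_of_le hij
  simp only [rpow_succ_mul_eq_pow hq₀.le, sub_nonneg] at hi ⊢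
  have hqst : q ^ s ≤ q ^ t := Real.rpow_le_rpow_of_exponent_ge hq₀ hq₁.le hts
  calc s * (q ^ s) ^ (i + d + 1) = s * (q ^ s) ^ (i + 1) * (q ^ s) ^ d := by ring
    _ ≤ t * (q ^ t) ^ (i + 1) * (q ^ t) ^ d := by gcongr
    _ = t * (q ^ t) ^ (i + d + 1) := by ring

end Rpow

/-- The Lambert-type series `∑_{k ≥ 1} k ^ m q ^ (k x) / (1 - q ^ k)`, with `k` shifted to start at
`0`. Differentiation in `x` raises `m` by one; up to elementary terms, `m = -1, 0, 1` give
`log Γ_q`, `ψ_q` and `ψ_q'`. -/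
noncomputable def qPolygammaSeries (q : ℝ) (m : ℤ) (x : ℝ) : ℝ :=
  ∑' k : ℕ, ((k : ℝ) + 1) ^ m / (1 - q ^ (k + 1)) * q ^ (((k : ℝ) + 1) * x)

section QPolygammaSeries

variable {q : ℝ}

lemma qPolygammaSeries_coeff_pos (hq₀ : 0 ≤ q) (hq₁ : q < 1) (m : ℤ) (k : ℕ) :
    0 < ((k : ℝ) + 1) ^ m / (1 - q ^ (k + 1)) :=
  div_pos (by positivity) (one_sub_pow_succ_pos hq₀ hq₁ k)

lemma summable_qPolygammaSeries (hq₀ : 0 < q) (hq₁ : q < 1) (m : ℤ) {x : ℝ} (hx : 0 < x) :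
    Summable fun k : ℕ ↦ ((k : ℝ) + 1) ^ m / (1 - q ^ (k + 1)) * q ^ (((k : ℝ) + 1) * x) := by
  have hqx : ‖q ^ x‖ < 1 := by
    rw [Real.norm_of_nonneg (by positivity)]
    exact Real.rpow_lt_one hq₀.le hq₁ hx
  have hgeom : Summable fun k : ℕ ↦ (k : ℝ) ^ m.toNat * (q ^ x) ^ k :=
    summable_pow_mul_geometric_of_norm_lt_one m.toNat hqx
  refine (((summable_nat_add_iff 1).2 hgeom).mul_left (1 - q)⁻¹).of_nonneg_of_le
    (fun k ↦ ?_) (fun k ↦ ?_)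
  · exact mul_nonneg (qPolygammaSeries_coeff_pos hq₀.le hq₁ m k).le (by positivity)
  · have hpow : ((k : ℝ) + 1) ^ m ≤ ((k : ℝ) + 1) ^ m.toNat := by
      rw [← zpow_natCast]
      exact zpow_le_zpow_right₀ (by simp) m.self_le_toNat
    have hden : 1 - q ≤ 1 - q ^ (k + 1) :=
      sub_le_sub_left (pow_le_of_le_one hq₀.le hq₁.le k.succ_ne_zero) 1
    rw [rpow_succ_mul_eq_pow hq₀.le, Nat.cast_succ, ← mul_assoc, inv_mul_eq_div]
    exact mul_le_mul_of_nonneg_right (div_le_div₀ (by positivity) hpow (sub_pos.2 hq₁) hden)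
      (by positivity)

lemma antitoneOn_qPolygammaSeries (hq₀ : 0 < q) (hq₁ : q < 1) (m : ℤ) :
    AntitoneOn (qPolygammaSeries q m) (Set.Ioi 0) := fun _ hx _ hy hxy ↦
  (summable_qPolygammaSeries hq₀ hq₁ m hy).tsum_le_tsum (fun k ↦
    mul_le_mul_of_nonneg_left
      (Real.rpow_le_rpow_of_exponent_ge hq₀ hq₁.le (by gcongr))
      (qPolygammaSeries_coeff_pos hq₀.le hq₁ m k).le)
    (summable_qPolygammaSeries hq₀ hq₁ m hx)

lemma hasDerivAt_qPolygammaSeries_term (hq₀ : 0 < q) (m : ℤ) (k : ℕ) (x : ℝ) :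
    HasDerivAt (fun y ↦ ((k : ℝ) + 1) ^ m / (1 - q ^ (k + 1)) * q ^ (((k : ℝ) + 1) * y))
      (Real.log q *
        (((k : ℝ) + 1) ^ (m + 1) / (1 - q ^ (k + 1)) * q ^ (((k : ℝ) + 1) * x))) x := by
  refine (((hasDerivAt_const_mul ((k : ℝ) + 1)).const_rpow hq₀).const_mul _).congr_deriv ?_
  rw [zpow_add_one₀ (by positivity)]
  ring

lemma hasDerivAt_qPolygammaSeries (hq₀ : 0 < q) (hq₁ : q < 1) (m : ℤ) {x : ℝ} (hx : 0 < x) :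
    HasDerivAt (qPolygammaSeries q m) (Real.log q * qPolygammaSeries q (m + 1) x) x := by
  have hmem : x ∈ Set.Ioi (x / 2) := half_lt_self hx
  have h := hasDerivAt_tsum_of_isPreconnected
    ((summable_qPolygammaSeries hq₀ hq₁ (m + 1) (half_pos hx)).mul_left ‖Real.log q‖) isOpen_Ioi
    isPreconnected_Ioi (fun k y _ ↦ hasDerivAt_qPolygammaSeries_term hq₀ m k y)
    (fun k y hy ↦ ?_) hmem (summable_qPolygammaSeries hq₀ hq₁ m hx) hmem
  · rwa [tsum_mul_left] at h
  · have hcoeff := (qPolygammaSeries_coeff_pos hq₀.le hq₁ (m + 1) k).le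
    rw [norm_mul, Real.norm_of_nonneg (mul_nonneg hcoeff (by positivity))]
    refine mul_le_mul_of_nonneg_left (mul_le_mul_of_nonneg_left ?_ hcoeff) (norm_nonneg _)
    exact Real.rpow_le_rpow_of_exponent_ge hq₀ hq₁.le
      (mul_le_mul_of_nonneg_left (Set.mem_Ioi.1 hy).le (by positivity))

lemma antitoneOn_mul_qPolygammaSeries_one (hq₀ : 0 < q) (hq₁ : q < 1) :
    AntitoneOn (fun x ↦ x * qPolygammaSeries q 1 x) (Set.Ioi 0) := by
  intro t ht s hs hts
  have hf := ((hasSum_rpow_succ_mul hq₀.le hq₁ ht).mul_left t).sub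
    ((hasSum_rpow_succ_mul hq₀.le hq₁ hs).mul_left s)
  have hwf : HasSum (fun k : ℕ ↦ ((k : ℝ) + 1) / (1 - q ^ (k + 1)) *
      (t * q ^ (((k : ℝ) + 1) * t) - s * q ^ (((k : ℝ) + 1) * s)))
      (t * qPolygammaSeries q 1 t - s * qPolygammaSeries q 1 s) := by
    refine (((summable_qPolygammaSeries hq₀ hq₁ 1 ht).hasSum.mul_left t).sub
      ((summable_qPolygammaSeries hq₀ hq₁ 1 hs).hasSum.mul_left s)).congr_fun fun k ↦ ?_
    rw [zpow_one]
    ring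
  have hsum : 0 ≤ ∑' k : ℕ, (t * q ^ (((k : ℝ) + 1) * t) - s * q ^ (((k : ℝ) + 1) * s)) := by
    rw [hf.tsum_eq]
    exact sub_nonneg.2 (mul_rpow_div_one_sub_rpow_le hq₀ hq₁ ht hts)
  have hnonneg := tsum_mul_nonneg_of_single_crossing (monotone_succ_div_one_sub_pow_succ hq₀ hq₁)
    (by simpa using hq₁.le) (mul_rpow_succ_mul_single_crossing hq₀ hq₁ (le_of_lt ht) hts)
    hf.summable hwf.summable hsum
  exact sub_nonneg.1 (hwf.tsum_eq ▸ hnonneg)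

lemma hasSum_rpow_succ_mul_add_div (hq₀ : 0 < q) (hq₁ : q < 1) (x : ℝ) (k : ℕ) :
    HasSum (fun j : ℕ ↦ q ^ (((k : ℝ) + 1) * (j + x)) / (k + 1))
      (((k : ℝ) + 1) ^ (-1 : ℤ) / (1 - q ^ (k + 1)) * q ^ (((k : ℝ) + 1) * x)) := by
  have hratio : q ^ (k + 1) < 1 := pow_lt_one₀ hq₀.le hq₁ k.succ_ne_zero
  have hgeom := (hasSum_geometric_of_lt_one (by positivity) hratio).mul_left
    (q ^ (((k : ℝ) + 1) * x) / (k + 1))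
  have hvalue : ((k : ℝ) + 1) ^ (-1 : ℤ) / (1 - q ^ (k + 1)) * q ^ (((k : ℝ) + 1) * x) =
      q ^ (((k : ℝ) + 1) * x) / (k + 1) * (1 - q ^ (k + 1))⁻¹ := by
    rw [zpow_neg_one]
    ring
  rw [hvalue]
  refine hgeom.congr_fun fun j ↦ ?_
  rw [mul_add, Real.rpow_add hq₀, rpow_succ_mul_eq_pow hq₀.le, Real.rpow_natCast, pow_right_comm]
  ring

lemma hasSum_neg_log_one_sub_rpow (hq₀ : 0 < q) (hq₁ : q < 1) {x : ℝ} (hx : 0 < x) :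
    HasSum (fun j : ℕ ↦ -Real.log (1 - q ^ ((j : ℝ) + x))) (qPolygammaSeries q (-1) x) := by
  let f : ℕ × ℕ → ℝ := fun p ↦ q ^ (((p.1 : ℝ) + 1) * (p.2 + x)) / (p.1 + 1)
  have hrow := hasSum_rpow_succ_mul_add_div hq₀ hq₁ x
  have hcol : ∀ j : ℕ, HasSum (fun k ↦ f (k, j)) (-Real.log (1 - q ^ ((j : ℝ) + x))) := by
    intro j
    simp only [f, rpow_succ_mul_eq_pow hq₀.le]
    apply Real.hasSum_pow_div_log_of_abs_lt_one
    rw [abs_of_pos (by positivity)]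
    exact Real.rpow_lt_one hq₀.le hq₁ (by positivity)
  have hf : Summable f := by
    rw [summable_prod_of_nonneg fun p ↦ by positivity]
    refine ⟨fun k ↦ (hrow k).summable, ?_⟩
    simpa only [f, (hrow _).tsum_eq] using summable_qPolygammaSeries hq₀ hq₁ (-1) hx
  have hsum : qPolygammaSeries q (-1) x = ∑' p, f p := (hf.hasSum.prod_fiberwise hrow).tsum_eq
  rw [hsum]
  exact ((Equiv.prodComm ℕ ℕ).hasSum_iff.2 hf.hasSum).prod_fiberwise hcol

end QPolygammaSeries

lemma qDigamma_eq_log_add_qPolygammaSeries (q x : ℝ) :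
    qDigamma q x = -Real.log (1 - q) + Real.log q * qPolygammaSeries q 0 x := by
  simp only [qDigamma, qPolygammaSeries, zpow_zero, one_div_mul_eq_div]

section QGamma

variable {q : ℝ}

lemma qGamma_eq_rpow_mul_exp (hq₀ : 0 < q) (hq₁ : q < 1) {x : ℝ} (hx : 0 < x) :
    qGamma q x = (1 - q) ^ (1 - x) *
      Real.exp (qPolygammaSeries q (-1) x - qPolygammaSeries q (-1) 1) := by
  have hprod := ((hasSum_neg_log_one_sub_rpow hq₀ hq₁ hx).sub
    (hasSum_neg_log_one_sub_rpow hq₀ hq₁ one_pos)).rexp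
  rw [qGamma, ← hprod.tprod_eq]
  congr 2 with j
  have hnum : 0 < 1 - q ^ ((j : ℝ) + 1) := one_sub_rpow_pos hq₀.le hq₁ (by positivity)
  have hden : 0 < 1 - q ^ ((j : ℝ) + x) := one_sub_rpow_pos hq₀.le hq₁ (by positivity)
  rw [Function.comp_apply, neg_sub_neg, Real.exp_sub, Real.exp_log hnum, Real.exp_log hden,
    ← Nat.cast_succ, Real.rpow_natCast]

lemma qGamma_pos (hq₀ : 0 < q) (hq₁ : q < 1) {x : ℝ} (hx : 0 < x) : 0 < qGamma q x := by
  rw [qGamma_eq_rpow_mul_exp hq₀ hq₁ hx]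
  exact mul_pos (Real.rpow_pos_of_pos (sub_pos.2 hq₁) _) (Real.exp_pos _)

lemma log_qGamma (hq₀ : 0 < q) (hq₁ : q < 1) {x : ℝ} (hx : 0 < x) :
    Real.log (qGamma q x) = (1 - x) * Real.log (1 - q) +
      (qPolygammaSeries q (-1) x - qPolygammaSeries q (-1) 1) := by
  have hq : 0 < 1 - q := sub_pos.2 hq₁
  rw [qGamma_eq_rpow_mul_exp hq₀ hq₁ hx,
    Real.log_mul (Real.rpow_pos_of_pos hq _).ne' (Real.exp_ne_zero _), Real.log_rpow hq,
    Real.log_exp]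

lemma hasDerivAt_log_qGamma (hq₀ : 0 < q) (hq₁ : q < 1) {x : ℝ} (hx : 0 < x) :
    HasDerivAt (fun y ↦ Real.log (qGamma q y)) (qDigamma q x) x := by
  have hderiv := (((hasDerivAt_id x).const_sub 1).mul_const (Real.log (1 - q))).add
    ((hasDerivAt_qPolygammaSeries hq₀ hq₁ (-1) hx).sub_const (qPolygammaSeries q (-1) 1))
  refine (hderiv.congr_deriv ?_).congr_of_eventuallyEq ?_
  · rw [qDigamma_eq_log_add_qPolygammaSeries, neg_one_mul, neg_add_cancel]
  · filter_upwards [Ioi_mem_nhds hx] with y hy using log_qGamma hq₀ hq₁ hy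

lemma hasDerivAt_qDigamma (hq₀ : 0 < q) (hq₁ : q < 1) {x : ℝ} (hx : 0 < x) :
    HasDerivAt (qDigamma q) (Real.log q ^ 2 * qPolygammaSeries q 1 x) x := by
  rw [funext (qDigamma_eq_log_add_qPolygammaSeries q)]
  refine (((hasDerivAt_qPolygammaSeries hq₀ hq₁ 0 hx).const_mul _).const_add _).congr_deriv ?_
  rw [zero_add]
  ring

lemma monotoneOn_qDigamma (hq₀ : 0 < q) (hq₁ : q < 1) :
    MonotoneOn (qDigamma q) (Set.Ioi 0) := by
  intro x hx y hy hxy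
  rw [qDigamma_eq_log_add_qPolygammaSeries, qDigamma_eq_log_add_qPolygammaSeries]
  exact add_le_add_right (mul_le_mul_of_nonpos_left
    (antitoneOn_qPolygammaSeries hq₀ hq₁ 0 hx hy hxy) (Real.log_nonpos hq₀.le hq₁.le)) _

end QGamma

/-- The logarithm of the ratio `Γ_q(ax)^α / Γ_q(bx)^β`; its monotonicity and convexity in `x` give
the two bounds on quotients of such ratios. -/
noncomputable def logQGammaRatio (q a b α β x : ℝ) : ℝ :=
  α * Real.log (qGamma q (a * x)) - β * Real.log (qGamma q (b * x))

section LogQGammaRatio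

variable {q a b α β : ℝ}

lemma qGamma_rpow_div_qGamma_rpow (hq₀ : 0 < q) (hq₁ : q < 1) (ha : 0 < a) (hb : 0 < b) {x : ℝ}
    (hx : 0 < x) :
    qGamma q (a * x) ^ α / qGamma q (b * x) ^ β = Real.exp (logQGammaRatio q a b α β x) := by
  rw [Real.rpow_def_of_pos (qGamma_pos hq₀ hq₁ (mul_pos ha hx)),
    Real.rpow_def_of_pos (qGamma_pos hq₀ hq₁ (mul_pos hb hx)), ← Real.exp_sub, mul_comm _ α,
    mul_comm _ β, logQGammaRatio]

lemma hasDerivAt_logQGammaRatio (hq₀ : 0 < q) (hq₁ : q < 1) (ha : 0 < a) (hb : 0 < b)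
    (h : α * a = β * b) {x : ℝ} (hx : 0 < x) :
    HasDerivAt (logQGammaRatio q a b α β)
      (α * a * (qDigamma q (a * x) - qDigamma q (b * x))) x := by
  have hΓa := (hasDerivAt_log_qGamma hq₀ hq₁ (mul_pos ha hx)).comp x (hasDerivAt_const_mul a)
  have hΓb := (hasDerivAt_log_qGamma hq₀ hq₁ (mul_pos hb hx)).comp x (hasDerivAt_const_mul b)
  refine ((hΓa.const_mul α).sub (hΓb.const_mul β)).congr_deriv ?_
  linear_combination qDigamma q (b * x) * h

lemma hasDerivAt_qDigamma_comp_mul_sub (hq₀ : 0 < q) (hq₁ : q < 1) (ha : 0 < a) (hb : 0 < b)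
    {x : ℝ} (hx : 0 < x) :
    HasDerivAt (fun y ↦ qDigamma q (a * y) - qDigamma q (b * y))
      (Real.log q ^ 2 * (a * qPolygammaSeries q 1 (a * x) - b * qPolygammaSeries q 1 (b * x)))
      x := by
  have hψa := (hasDerivAt_qDigamma hq₀ hq₁ (mul_pos ha hx)).comp x (hasDerivAt_const_mul a)
  have hψb := (hasDerivAt_qDigamma hq₀ hq₁ (mul_pos hb hx)).comp x (hasDerivAt_const_mul b)
  refine (hψa.sub hψb).congr_deriv ?_
  ring

lemma mul_qPolygammaSeries_one_mul_le (hq₀ : 0 < q) (hq₁ : q < 1) (ha : 0 < a) (hab : a ≤ b)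
    {x : ℝ} (hx : 0 < x) :
    b * qPolygammaSeries q 1 (b * x) ≤ a * qPolygammaSeries q 1 (a * x) := by
  have hanti := antitoneOn_mul_qPolygammaSeries_one hq₀ hq₁ (mul_pos ha hx)
    (mul_pos (ha.trans_le hab) hx) (mul_le_mul_of_nonneg_right hab hx.le)
  refine le_of_mul_le_mul_left ?_ hx
  linarith

lemma antitoneOn_logQGammaRatio (hq₀ : 0 < q) (hq₁ : q < 1) (ha : 0 < a) (hab : a ≤ b)
    (hα : 0 ≤ α) (h : α * a = β * b) :
    AntitoneOn (logQGammaRatio q a b α β) (Set.Ioi 0) := by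
  have hb := ha.trans_le hab
  have hderiv : ∀ x ∈ Set.Ioi (0 : ℝ), HasDerivAt (logQGammaRatio q a b α β) _ x :=
    fun x hx ↦ hasDerivAt_logQGammaRatio hq₀ hq₁ ha hb h hx
  refine antitoneOn_of_hasDerivWithinAt_nonpos (convex_Ioi 0) (HasDerivAt.continuousOn hderiv)
    (fun x hx ↦ (hderiv x (interior_subset hx)).hasDerivWithinAt) (fun x hx ↦ ?_)
  replace hx : 0 < x := interior_subset hx
  have hψ := monotoneOn_qDigamma hq₀ hq₁ (mul_pos ha hx) (mul_pos hb hx)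
    (mul_le_mul_of_nonneg_right hab hx.le)
  exact mul_nonpos_of_nonneg_of_nonpos (mul_nonneg hα ha.le) (sub_nonpos.2 hψ)

lemma convexOn_logQGammaRatio (hq₀ : 0 < q) (hq₁ : q < 1) (ha : 0 < a) (hab : a ≤ b)
    (hα : 0 ≤ α) (h : α * a = β * b) :
    ConvexOn ℝ (Set.Ioi 0) (logQGammaRatio q a b α β) := by
  have hb := ha.trans_le hab
  have hderiv : ∀ x ∈ Set.Ioi (0 : ℝ), HasDerivAt (logQGammaRatio q a b α β) _ x :=
    fun x hx ↦ hasDerivAt_logQGammaRatio hq₀ hq₁ ha hb h hx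
  refine convexOn_of_hasDerivWithinAt2_nonneg (convex_Ioi 0) (HasDerivAt.continuousOn hderiv)
    (fun x hx ↦ (hderiv x (interior_subset hx)).hasDerivWithinAt)
    (fun x hx ↦ ((hasDerivAt_qDigamma_comp_mul_sub hq₀ hq₁ ha hb
      (interior_subset hx)).const_mul (α * a)).hasDerivWithinAt) (fun x hx ↦ ?_)
  have hψ' := mul_qPolygammaSeries_one_mul_le hq₀ hq₁ ha hab (interior_subset hx)
  exact mul_nonneg (mul_nonneg hα ha.le) (mul_nonneg (sq_nonneg _) (sub_nonneg.2 hψ'))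

end LogQGammaRatio

theorem stmt5 (q a b α β x x₁ : ℝ) (hq0 : 0 < q) (hq1 : q < 1) (ha : 0 < a) (hab : a < b)
    (hα : 0 ≤ α) (hβ : 0 ≤ β) (h : α * a = β * b) (hx₁ : 0 < x₁) (hx : x₁ < x) :
    Real.exp (α * a * (x - x₁) * (qDigamma q (a * x₁) - qDigamma q (b * x₁))) ≤
      (qGamma q (b * x₁)) ^ β / (qGamma q (a * x₁)) ^ α *
        ((qGamma q (a * x)) ^ α / (qGamma q (b * x)) ^ β) ∧
    (qGamma q (b * x₁)) ^ β / (qGamma q (a * x₁)) ^ α *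
        ((qGamma q (a * x)) ^ α / (qGamma q (b * x)) ^ β) ≤ 1 := by
  have hb := ha.trans hab
  have hx₀ := hx₁.trans hx
  rw [← inv_div, qGamma_rpow_div_qGamma_rpow hq0 hq1 ha hb hx₁,
    qGamma_rpow_div_qGamma_rpow hq0 hq1 ha hb hx₀, ← Real.exp_neg, ← Real.exp_add,
    neg_add_eq_sub, Real.exp_le_exp, Real.exp_le_one_iff]
  constructor
  · have htangent := (convexOn_logQGammaRatio hq0 hq1 ha hab.le hα h).le_slope_of_hasDerivAt
      hx₁ hx₀ hx (hasDerivAt_logQGammaRatio hq0 hq1 ha hb h hx₁)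
    rw [slope_def_field, le_div_iff₀ (sub_pos.2 hx)] at htangent
    rwa [mul_right_comm]
  · exact sub_nonpos.2 (antitoneOn_logQGammaRatio hq0 hq1 ha hab.le hα h hx₁ hx₀ hx.le)
end

section
/- Let 0<q<1 and let β be a real number with β ≥ −13 ln q/(6(1−q²)). Then the function g_β(q;·) defined for x>0 by g_β(q;x) = (1/(1+q))·[Γ_{q²}(x+1/2)/Γ_{q²}(x+1)]²·exp[β(1−q²)q^{2x}/(2(1−q^{2x})) + ψ_q(2x)] is logarithmically completely monotonic on (0,∞). -/
/-- A positive function `f` is logarithmically completely monotonic on `s`: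
`ln f` has derivatives of all orders on `s` and `(-1)^n (ln f)^(n)(x) ≥ 0`
for all `x ∈ s` and all `n ≥ 1`. -/
def LogCompletelyMonotonicOn (f : ℝ → ℝ) (s : Set ℝ) : Prop :=
  (∀ x ∈ s, 0 < f x) ∧
  ContDiffOn ℝ (⊤ : ℕ∞) (fun y => Real.log (f y)) s ∧
  ∀ n : ℕ, 1 ≤ n → ∀ x ∈ s, 0 ≤ (-1 : ℝ) ^ n * iteratedDeriv n (fun y => Real.log (f y)) x

open Real Set MeasureTheory ProbabilityTheory

/-! Expanding every factor in powers of `q ^ (2 * x)` gives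
`log g_β(q; x) = ∑ c_m q ^ (2 * m * x)`, summed over `m ≥ 1`, where with `u = q ^ m`,
`c_m = 2 * u / (m * (1 + u)) + β * (1 - q ^ 2) / 2 + log q / (1 - u)`.
Since `q ^ (2 * m * x) = exp (-(-2 * m * log q) * x)`, this is the Laplace transform of a discrete
measure on the positive half-line as soon as all `c_m` are nonnegative, and such transforms are
completely monotonic. With `t = -m * log q`, nonnegativity of `c_m` for the smallest admissible
`β` is the inequality `t / (exp t - 1) ≤ 2 / (exp t + 1) + t / 12`. -/

section LaplaceTransform

variable {f : ℝ → ℝ} {s : Set ℝ}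

theorem logCompletelyMonotonicOn_of_log_eq_mgf {Ω : Type*} [MeasurableSpace Ω] {μ : Measure Ω}
    {X : Ω → ℝ} (hs : IsOpen s) (hX : 0 ≤ᵐ[μ] X)
    (hint : ∀ x ∈ s, Integrable (fun ω ↦ exp (-x * X ω)) μ) (hpos : ∀ x ∈ s, 0 < f x)
    (hlog : ∀ x ∈ s, log (f x) = mgf X μ (-x)) : LogCompletelyMonotonicOn f s := by
  have hmem : ∀ x ∈ s, -x ∈ interior (integrableExpSet X μ) := fun x hx ↦
    interior_maximal (fun y hy ↦ by simpa [integrableExpSet] using hint (-y) hy) hs.neg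
      (by simpa using hx)
  refine ⟨hpos, ?_, fun n _ x hx ↦ ?_⟩
  · refine ContDiffOn.congr (fun x hx ↦ ?_) hlog
    exact ((analyticAt_mgf (hmem x hx)).contDiffAt.comp x contDiff_neg.contDiffAt).contDiffWithinAt
  · have hderiv : iteratedDeriv n (fun y ↦ log (f y)) x =
        (-1) ^ n * ∫ ω, X ω ^ n * exp (-x * X ω) ∂μ := by
      rw [EqOn.iteratedDeriv_of_isOpen hlog hs n hx, iteratedDeriv_comp_neg,
        iteratedDeriv_mgf (hmem x hx), smul_eq_mul]
    rw [hderiv, ← mul_assoc, ← mul_pow, neg_one_mul, neg_neg, one_pow, one_mul]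
    refine integral_nonneg_of_ae ?_
    filter_upwards [hX] with ω hω
    exact mul_nonneg (pow_nonneg hω n) (exp_pos _).le

theorem logCompletelyMonotonicOn_of_hasSum_exp {ι : Type*} [Countable ι] {c r : ι → ℝ}
    (hs : IsOpen s) (hc : ∀ k, 0 ≤ c k) (hr : ∀ k, 0 ≤ r k) (hpos : ∀ x ∈ s, 0 < f x)
    (hsum : ∀ x ∈ s, HasSum (fun k ↦ c k * exp (-x * r k)) (log (f x))) :
    LogCompletelyMonotonicOn f s := by
  let μ : Measure ℝ := Measure.sum fun k ↦ ENNReal.ofReal (c k) • Measure.dirac (r k)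
  have hsummable : ∀ x ∈ s,
      Summable fun k ↦ (ENNReal.ofReal (c k)).toReal * ‖exp (-x * r k)‖ := fun x hx ↦ by
    simpa only [ENNReal.toReal_ofReal (hc _), norm_of_nonneg (exp_pos _).le]
      using (hsum x hx).summable
  refine logCompletelyMonotonicOn_of_log_eq_mgf (μ := μ) (X := id) hs ?_
    (fun x hx ↦ integrable_sum_dirac (by simp) (hsummable x hx)) hpos fun x hx ↦ ?_
  · refine Measure.ae_sum_iff.mpr fun k ↦ Measure.ae_smul_measure ?_ _
    rw [ae_dirac_eq]
    exact Filter.eventually_pure.mpr (hr k)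
  · refine (hsum x hx).unique ?_
    simpa only [ENNReal.toReal_ofReal (hc _), smul_eq_mul, mgf, id_eq] using
      hasSum_integral_sum_dirac (f := fun y ↦ exp (-x * y)) (by simp) (hsummable x hx)

end LaplaceTransform

section CoefficientInequality

theorem mul_exp_add_one_le {t : ℝ} (ht : 0 ≤ t) :
    t * (exp t + 1) ≤ 2 * (exp t - 1) + t / 12 * (exp t ^ 2 - 1) := by
  -- Right side minus left side increases with `exp t` above the Taylor polynomial `P`, so it is
  -- enough to compare the two sides with `exp t` replaced by `P`.
  set P := 1 + t + t ^ 2 / 2 + t ^ 3 / 6 with hP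
  have hexp : P ≤ exp t := by
    simpa [Finset.sum_range_succ, Nat.factorial] using sum_le_exp_of_nonneg ht 4
  have hslope : 0 ≤ 2 - t + t / 12 * (exp t + P) := by
    have hsum : 2 * (1 + t) ≤ exp t + P := by
      have : 0 ≤ t ^ 2 / 2 + t ^ 3 / 6 := by positivity
      linarith
    nlinarith [mul_le_mul_of_nonneg_left hsum ht, sq_nonneg (t - 2)]
  have hcubic : t * (P + 1) ≤ 2 * (P - 1) + t / 12 * (P ^ 2 - 1) := by
    have hfactor : 2 * (P - 1) + t / 12 * (P ^ 2 - 1) - t * (P + 1) =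
        t ^ 2 * (1 / 6 - t ^ 2 / 18 + 7 * t ^ 3 / 144 + t ^ 4 / 72 + t ^ 5 / 432) := by
      rw [hP]
      ring
    have hlow : 0 ≤ 1 / 6 - t ^ 2 / 18 + 7 * t ^ 3 / 144 := by
      nlinarith [mul_nonneg ht (sq_nonneg (t - 1))]
    have hhigh : 0 ≤ t ^ 4 / 72 + t ^ 5 / 432 := by positivity
    rw [← sub_nonneg, hfactor]
    exact mul_nonneg (sq_nonneg t) (by linarith)
  linarith [mul_nonneg (sub_nonneg.mpr hexp) hslope]

theorem div_exp_sub_one_le {t : ℝ} (ht : 0 < t) :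
    t / (exp t - 1) ≤ 2 / (exp t + 1) + t / 12 := by
  have hexp : 0 < exp t - 1 := by linarith [add_one_lt_exp ht.ne']
  have hdiff : 2 / (exp t + 1) + t / 12 - t / (exp t - 1) =
      (2 * (exp t - 1) + t / 12 * (exp t ^ 2 - 1) - t * (exp t + 1)) /
        ((exp t + 1) * (exp t - 1)) := by
    field_simp
    ring
  rw [← sub_nonneg, hdiff]
  exact div_nonneg (sub_nonneg.mpr (mul_exp_add_one_le ht.le)) (by positivity)

theorem neg_log_div_one_sub_le {u : ℝ} (hu0 : 0 < u) (hu1 : u < 1) :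
    -log u / (1 - u) ≤ 2 * u / (1 + u) - 13 / 12 * log u := by
  have h := div_exp_sub_one_le (neg_pos.mpr (log_neg hu0 hu1))
  rw [exp_neg, exp_log hu0] at h
  have hu : 0 < 1 - u := sub_pos.mpr hu1
  have hleft : -log u / (u⁻¹ - 1) = -log u / (1 - u) + log u := by
    field_simp
    ring
  have hright : 2 / (u⁻¹ + 1) = 2 * u / (1 + u) := by field_simp
  linarith

end CoefficientInequality

section QDilog

/-- The quantum dilogarithm `∑_{m ≥ 1} w ^ m / (m * (1 - p ^ m))`, which is minus the logarithm of
the infinite `p`-Pochhammer symbol of `w`. The summation index is `k = m - 1`. -/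
noncomputable def qDilog (p w : ℝ) : ℝ :=
  ∑' k : ℕ, w ^ (k + 1) / (((k : ℝ) + 1) * (1 - p ^ (k + 1)))

variable {p w : ℝ}

theorem one_sub_pow_mul_pos (hp0 : 0 ≤ p) (hp1 : p < 1) (hw0 : 0 ≤ w) (hw1 : w < 1) (j : ℕ) :
    0 < 1 - p ^ j * w :=
  sub_pos.mpr ((mul_le_of_le_one_left hw0 (pow_le_one₀ hp0 hp1.le)).trans_lt hw1)

theorem one_sub_pow_succ_pos_s7 (hp0 : 0 ≤ p) (hp1 : p < 1) (k : ℕ) : 0 < 1 - p ^ (k + 1) :=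
  sub_pos.mpr (pow_lt_one₀ hp0 hp1 k.succ_ne_zero)

theorem hasSum_geometric_succ_of_lt_one (hw0 : 0 ≤ w) (hw1 : w < 1) :
    HasSum (fun k : ℕ ↦ w ^ (k + 1)) (w / (1 - w)) := by
  simpa only [pow_succ', div_eq_mul_inv] using (hasSum_geometric_of_lt_one hw0 hw1).mul_left w

theorem summable_pow_div_one_sub_pow (hp0 : 0 ≤ p) (hp1 : p < 1) (hw0 : 0 ≤ w) (hw1 : w < 1) :
    Summable fun k : ℕ ↦ w ^ (k + 1) / (1 - p ^ (k + 1)) := by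
  have hgeom : Summable fun k : ℕ ↦ w ^ (k + 1) / (1 - p) :=
    (hasSum_geometric_succ_of_lt_one hw0 hw1).summable.div_const _
  have hden := one_sub_pow_succ_pos_s7 hp0 hp1
  refine hgeom.of_nonneg_of_le (fun k ↦ div_nonneg (pow_nonneg hw0 _) (hden k).le) fun k ↦ ?_
  have hpow : p ^ (k + 1) ≤ p := pow_le_of_le_one hp0 hp1.le k.succ_ne_zero
  gcongr

theorem hasSum_qDilog (hp0 : 0 ≤ p) (hp1 : p < 1) (hw0 : 0 ≤ w) (hw1 : w < 1) :
    HasSum (fun k : ℕ ↦ w ^ (k + 1) / (((k : ℝ) + 1) * (1 - p ^ (k + 1)))) (qDilog p w) := by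
  have hden := one_sub_pow_succ_pos_s7 hp0 hp1
  refine ((summable_pow_div_one_sub_pow hp0 hp1 hw0 hw1).of_nonneg_of_le (fun k ↦ ?_)
    fun k ↦ ?_).hasSum
  · have := hden k
    positivity
  · exact div_le_div_of_nonneg_left (pow_nonneg hw0 _) (hden k)
      (le_mul_of_one_le_left (hden k).le (by simp))

theorem hasSum_neg_log_one_sub_pow_mul (hp0 : 0 ≤ p) (hp1 : p < 1) (hw0 : 0 ≤ w) (hw1 : w < 1) :
    HasSum (fun j : ℕ ↦ -log (1 - p ^ j * w)) (qDilog p w) := by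
  -- Expand each logarithm in powers of `w` and sum the geometric series over `j` first.
  have hsum_j (k : ℕ) : HasSum (fun j : ℕ ↦ (p ^ j * w) ^ (k + 1) / ((k : ℝ) + 1))
      (w ^ (k + 1) / (((k : ℝ) + 1) * (1 - p ^ (k + 1)))) := by
    convert! (hasSum_geometric_of_lt_one (pow_nonneg hp0 (k + 1))
      (pow_lt_one₀ hp0 hp1 k.succ_ne_zero)).mul_left (w ^ (k + 1) / ((k : ℝ) + 1)) using 1
    · funext j
      rw [mul_pow, pow_right_comm]
      ring
    · rw [← div_div, div_eq_mul_inv _ (1 - p ^ (k + 1))]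
  have hsum_k (j : ℕ) : HasSum (fun k : ℕ ↦ (p ^ j * w) ^ (k + 1) / ((k : ℝ) + 1))
      (-log (1 - p ^ j * w)) := by
    refine hasSum_pow_div_log_of_abs_lt_one ?_
    rw [abs_of_nonneg (by positivity)]
    exact sub_pos.mp (one_sub_pow_mul_pos hp0 hp1 hw0 hw1 j)
  have hsummable :
      Summable fun x : ℕ × ℕ ↦ (p ^ x.2 * w) ^ (x.1 + 1) / ((x.1 : ℝ) + 1) := by
    rw [summable_prod_of_nonneg fun x ↦ by simp only [Pi.zero_apply]; positivity]
    refine ⟨fun k ↦ (hsum_j k).summable, ?_⟩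
    simpa only [(hsum_j _).tsum_eq] using (hasSum_qDilog hp0 hp1 hw0 hw1).summable
  have htotal : ∑' x : ℕ × ℕ, (p ^ x.2 * w) ^ (x.1 + 1) / ((x.1 : ℝ) + 1) = qDilog p w :=
    (hsummable.hasSum.prod_fiberwise hsum_j).unique (hasSum_qDilog hp0 hp1 hw0 hw1)
  rw [← htotal]
  exact ((Equiv.prodComm ℕ ℕ).hasSum_iff.mpr hsummable.hasSum).prod_fiberwise hsum_k

end QDilog

section QGamma

variable {p x y : ℝ}

theorem qGamma_eq_exp (hp0 : 0 < p) (hp1 : p < 1) (hy : 0 < y) :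
    qGamma p y = exp ((1 - y) * log (1 - p) + (qDilog p (p ^ y) - qDilog p p)) := by
  have hw0 : 0 ≤ p ^ y := rpow_nonneg hp0.le y
  have hw1 : p ^ y < 1 := rpow_lt_one hp0.le hp1 hy
  have hnum := one_sub_pow_mul_pos hp0.le hp1 hp0.le hp1
  have hden := one_sub_pow_mul_pos hp0.le hp1 hw0 hw1
  have hfactor (j : ℕ) : (1 - p ^ (j + 1)) / (1 - p ^ ((j : ℝ) + y)) =
      (1 - p ^ j * p) / (1 - p ^ j * p ^ y) := by
    rw [rpow_add hp0, rpow_natCast, pow_succ]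
  have hlog : HasSum (fun j : ℕ ↦ log ((1 - p ^ j * p) / (1 - p ^ j * p ^ y)))
      (qDilog p (p ^ y) - qDilog p p) := by
    convert! (hasSum_neg_log_one_sub_pow_mul hp0.le hp1 hw0 hw1).sub
      (hasSum_neg_log_one_sub_pow_mul hp0.le hp1 hp0.le hp1) using 2 with j
    rw [log_div (hnum j).ne' (hden j).ne']
    ring
  rw [qGamma, tprod_congr hfactor,
    ← rexp_tsum_eq_tprod (fun j ↦ div_pos (hnum j) (hden j)) hlog.summable, hlog.tsum_eq, exp_add,
    rpow_def_of_pos (sub_pos.mpr hp1), mul_comm (log _)]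

theorem qGamma_pos_s7 (hp0 : 0 < p) (hp1 : p < 1) (hy : 0 < y) : 0 < qGamma p y := by
  rw [qGamma_eq_exp hp0 hp1 hy]
  exact exp_pos _

theorem log_qGamma_div_qGamma (hp0 : 0 < p) (hp1 : p < 1) (hx : 0 < x) (hy : 0 < y) :
    log (qGamma p x / qGamma p y) =
      (y - x) * log (1 - p) + (qDilog p (p ^ x) - qDilog p (p ^ y)) := by
  rw [qGamma_eq_exp hp0 hp1 hx, qGamma_eq_exp hp0 hp1 hy, ← exp_sub, log_exp]
  ring

theorem hasSum_qDigamma (hp0 : 0 < p) (hp1 : p < 1) (hy : 0 < y) :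
    HasSum (fun k : ℕ ↦ log p * ((p ^ y) ^ (k + 1) / (1 - p ^ (k + 1))))
      (qDigamma p y + log (1 - p)) := by
  have hterm (k : ℕ) : p ^ (((k : ℝ) + 1) * y) = (p ^ y) ^ (k + 1) := by
    rw [mul_comm, rpow_mul hp0.le]
    norm_cast
  simp only [qDigamma, hterm, neg_add_cancel_comm]
  exact (summable_pow_div_one_sub_pow hp0.le hp1 (rpow_nonneg hp0.le y)
    (rpow_lt_one hp0.le hp1 hy)).hasSum.mul_left _

end QGamma

section GBeta

/-- The function `g_β(q; ·)`, whose logarithmic complete monotonicity on `(0, ∞)` is at stake. -/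
noncomputable def gBeta (q β x : ℝ) : ℝ :=
  1 / (1 + q) * (qGamma (q ^ 2) (x + 1 / 2) / qGamma (q ^ 2) (x + 1)) ^ 2 *
    exp (β * (1 - q ^ 2) * q ^ (2 * x) / (2 * (1 - q ^ (2 * x))) + qDigamma q (2 * x))

/-- The coefficient of `q ^ (2 * (k + 1) * x)` in the expansion of `log (gBeta q β x)`
into exponentials. -/
noncomputable def logGBetaCoeff (q β : ℝ) (k : ℕ) : ℝ :=
  2 * q ^ (k + 1) / (((k : ℝ) + 1) * (1 + q ^ (k + 1))) + β * (1 - q ^ 2) / 2 +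
    log q / (1 - q ^ (k + 1))

variable {q β x : ℝ}

theorem gBeta_pos (hq0 : 0 < q) (hq1 : q < 1) (hx : 0 < x) : 0 < gBeta q β x := by
  have hp1 : q ^ 2 < 1 := pow_lt_one₀ hq0.le hq1 two_ne_zero
  have hhalf := qGamma_pos_s7 (pow_pos hq0 2) hp1 (show 0 < x + 1 / 2 by positivity)
  have hone := qGamma_pos_s7 (pow_pos hq0 2) hp1 (show 0 < x + 1 by positivity)
  unfold gBeta
  positivity

theorem log_gBeta (hq0 : 0 < q) (hq1 : q < 1) (hx : 0 < x) :
    log (gBeta q β x) =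
      2 * (qDilog (q ^ 2) (q ^ (2 * x) * q) - qDilog (q ^ 2) (q ^ (2 * x) * q ^ 2)) +
        β * (1 - q ^ 2) / 2 * (q ^ (2 * x) / (1 - q ^ (2 * x))) +
        (qDigamma q (2 * x) + log (1 - q)) := by
  have hp0 : 0 < q ^ 2 := pow_pos hq0 2
  have hp1 : q ^ 2 < 1 := pow_lt_one₀ hq0.le hq1 two_ne_zero
  have hhalf : 0 < x + 1 / 2 := by positivity
  have hone : 0 < x + 1 := by positivity
  have hratio := (div_pos (qGamma_pos_s7 hp0 hp1 hhalf) (qGamma_pos_s7 hp0 hp1 hone)).ne'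
  have hpow (y : ℝ) : (q ^ 2) ^ y = q ^ (2 * y) := by
    rw [rpow_mul hq0.le]
    norm_cast
  have hpow_half : (q ^ 2) ^ (x + 1 / 2) = q ^ (2 * x) * q := by
    rw [hpow, mul_add, mul_one_div_cancel two_ne_zero, rpow_add_one hq0.ne']
  have hpow_one : (q ^ 2) ^ (x + 1) = q ^ (2 * x) * q ^ 2 := by
    rw [rpow_add_one hp0.ne', hpow]
  have hlog_sq : log (1 - q ^ 2) = log (1 + q) + log (1 - q) := by
    rw [← log_mul (by positivity) (sub_pos.mpr hq1).ne']
    ring_nf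
  rw [gBeta, log_mul (by positivity) (exp_pos _).ne', log_mul (by positivity) (by positivity),
    log_pow, log_exp, log_qGamma_div_qGamma hp0 hp1 hhalf hone, hpow_half, hpow_one, one_div,
    log_inv, hlog_sq, mul_div_mul_comm]
  push_cast
  ring

theorem hasSum_log_gBeta (hq0 : 0 < q) (hq1 : q < 1) (hx : 0 < x) :
    HasSum (fun k : ℕ ↦ logGBetaCoeff q β k * exp (-x * (-2 * log q * (k + 1))))
      (log (gBeta q β x)) := by
  have hp0 : 0 ≤ q ^ 2 := sq_nonneg q
  have hp1 : q ^ 2 < 1 := pow_lt_one₀ hq0.le hq1 two_ne_zero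
  have hx2 : 0 < 2 * x := by positivity
  have hexp (k : ℕ) : exp (-x * (-2 * log q * (k + 1))) = (q ^ (2 * x)) ^ (k + 1) := by
    rw [← rpow_natCast, ← rpow_mul hq0.le, rpow_def_of_pos hq0]
    push_cast
    ring_nf
  have hdigamma := hasSum_qDigamma hq0 hq1 hx2
  have hz0 : 0 ≤ q ^ (2 * x) := rpow_nonneg hq0.le _
  have hz1 : q ^ (2 * x) < 1 := rpow_lt_one hq0.le hq1 hx2
  rw [log_gBeta hq0 hq1 hx]
  simp only [hexp]
  generalize q ^ (2 * x) = z at hdigamma hz0 hz1 ⊢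
  have hdilog_half := hasSum_qDilog hp0 hp1 (mul_nonneg hz0 hq0.le)
    ((mul_le_of_le_one_right hz0 hq1.le).trans_lt hz1)
  have hdilog_one := hasSum_qDilog hp0 hp1 (mul_nonneg hz0 hp0)
    ((mul_le_of_le_one_right hz0 hp1.le).trans_lt hz1)
  have hgeom := (hasSum_geometric_succ_of_lt_one hz0 hz1).mul_left (β * (1 - q ^ 2) / 2)
  convert! (((hdilog_half.sub hdilog_one).mul_left 2).add hgeom).add hdigamma using 2 with k
  have hu := one_sub_pow_succ_pos_s7 hq0.le hq1 k
  have hsq : 1 - (q ^ (k + 1)) ^ 2 = (1 - q ^ (k + 1)) * (1 + q ^ (k + 1)) := by ring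
  rw [logGBetaCoeff, mul_pow, mul_pow, pow_right_comm q 2, hsq]
  field_simp

theorem logGBetaCoeff_nonneg (hq0 : 0 < q) (hq1 : q < 1)
    (hβ : -13 * log q / (6 * (1 - q ^ 2)) ≤ β) (k : ℕ) : 0 ≤ logGBetaCoeff q β k := by
  have hm : (0 : ℝ) < k + 1 := by positivity
  have hβ' : -13 / 12 * log q ≤ β * (1 - q ^ 2) / 2 := by
    have hp : 0 < 1 - q ^ 2 := one_sub_pow_succ_pos_s7 hq0.le hq1 1
    linarith [(div_le_iff₀ (by positivity)).mp hβ]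
  have hlog : log (q ^ (k + 1)) = (k + 1) * log q := mod_cast log_pow q (k + 1)
  have h := neg_log_div_one_sub_le (pow_pos hq0 (k + 1)) (pow_lt_one₀ hq0.le hq1 k.succ_ne_zero)
  rw [hlog, ← sub_nonneg] at h
  have hscale : 2 * q ^ (k + 1) / ((k + 1) * (1 + q ^ (k + 1))) - 13 / 12 * log q +
      log q / (1 - q ^ (k + 1)) = (2 * q ^ (k + 1) / (1 + q ^ (k + 1)) -
        13 / 12 * ((k + 1) * log q) - -((k + 1) * log q) / (1 - q ^ (k + 1))) / (k + 1) := by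
    have hu := one_sub_pow_succ_pos_s7 hq0.le hq1 k
    field_simp
    ring
  have hnonneg := hscale ▸ div_nonneg h hm.le
  unfold logGBetaCoeff
  linarith

end GBeta

theorem stmt7 (q β : ℝ) (hq0 : 0 < q) (hq1 : q < 1)
    (hβ : β ≥ -13 * Real.log q / (6 * (1 - q ^ 2))) :
    LogCompletelyMonotonicOn
      (fun x => 1 / (1 + q) * (qGamma (q ^ 2) (x + 1 / 2) / qGamma (q ^ 2) (x + 1)) ^ 2 *
        Real.exp (β * (1 - q ^ 2) * q ^ (2 * x) / (2 * (1 - q ^ (2 * x))) + qDigamma q (2 * x)))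
      (Set.Ioi 0) := by
  have hrate (k : ℕ) : 0 ≤ -2 * log q * (k + 1) :=
    mul_nonneg (by linarith [log_neg hq0 hq1]) (by positivity)
  exact logCompletelyMonotonicOn_of_hasSum_exp (f := gBeta q β) isOpen_Ioi
    (logGBetaCoeff_nonneg hq0 hq1 hβ) hrate (fun _ hx ↦ gBeta_pos hq0 hq1 hx)
    (fun _ hx ↦ hasSum_log_gBeta hq0 hq1 hx)
end
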